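/- arXiv:1408.0994 — 2 statements merged into one kernel-verified Lean document; each statement's English description precedes it below -/
import Mathlib

section
/- For every invertible blocked matrix P there exists a decomposition (3) of P whose factors satisfy rank L + r₁ = n (i.e., rank L = n − r₁) and rank R + rank L = max(r₂, n + m − r₁ − r₄). -/
/-!
Write `C₁ = P₁ - L * P₃`. As soon as `C₁` is invertible, `L` determines the decomposition, with
`R = C₁⁻¹ * (P₂ - L * P₄)`, so everything reduces to choosing `L`. It must be injective on
`P₃ (ker P₁)` and have its range in a complement of `range P₁`; this makes `C₁` injective and
`rank L = n - r₁`. For the rank of `R`, choose a subspace `G` meeting `ker P₄` trivially and such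
that `P₂ G` meets `range P₁` trivially. Invertibility of `P` leaves room to prescribe `L * P₄ = P₂`
on `G`, and then `rank R ≤ m - dim G`. A general position argument gives such a `G` of dimension
`min (r₄, m + n - r₁ - r₂)`, which matches the lower bounds `rank R ≥ r₂ - rank L` and
`rank R ≥ m - r₄`.
-/

open Module

section Submodule

theorem sup_inf_eq_inf_of_disjoint_sup {α : Type*} [Lattice α] [OrderBot α] [IsModularLattice α]
    {a b x : α} (h : Disjoint x (a ⊔ b)) : (a ⊔ x) ⊓ b = a ⊓ b := by
  calc (a ⊔ x) ⊓ b = (a ⊔ x) ⊓ (a ⊔ b) ⊓ b := by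
        rw [inf_assoc, inf_eq_right.2 (le_sup_right : b ≤ a ⊔ b)]
    _ = a ⊓ b := by rw [sup_inf_assoc_of_le x le_sup_left, h.eq_bot, sup_bot_eq]

theorem finrank_map_eq_of_disjoint_ker {R M N : Type*} [Ring R] [AddCommGroup M] [Module R M]
    [AddCommGroup N] [Module R N] {f : M →ₗ[R] N} {p : Submodule R M}
    (h : Disjoint p (LinearMap.ker f)) : finrank R (p.map f) = finrank R p := by
  rw [← LinearMap.range_domRestrict]
  exact LinearMap.finrank_range_of_inj (LinearMap.injective_domRestrict_iff.2 h)

variable {K V N : Type*} [DivisionRing K] [AddCommGroup V] [Module K V] [AddCommGroup N]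
  [Module K N]

theorem exists_ge_inf_eq_inf_and_codisjoint_or_codisjoint [FiniteDimensional K V]
    (Z E S : Submodule K V) :
    ∃ G ≥ Z, G ⊓ E = Z ⊓ E ∧ G ⊓ S = Z ⊓ S ∧ (Codisjoint G E ∨ Codisjoint G S) := by
  obtain ⟨G, ⟨hZ, hE, hS⟩, hmax⟩ := exists_maximal_of_wellFoundedGT
    (fun G : Submodule K V ↦ Z ≤ G ∧ G ⊓ E = Z ⊓ E ∧ G ⊓ S = Z ⊓ S) ⟨Z, le_rfl, rfl, rfl⟩
  refine ⟨G, hZ, hE, hS, ?_⟩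
  by_contra! h
  obtain ⟨x, hxE, hxS⟩ : ∃ x, x ∉ G ⊔ E ∧ x ∉ G ⊔ S := by
    have hcover := mt (AddSubgroupClass.subset_union (H := (⊤ : Submodule K V))).1
      (by simpa only [top_le_iff, codisjoint_iff, not_or] using h)
    simpa only [Set.not_subset, Set.mem_union, SetLike.mem_coe, Submodule.mem_top,
      true_and, not_or] using hcover
  have inf_eq (T : Submodule K V) (hT : x ∉ G ⊔ T) : (G ⊔ K ∙ x) ⊓ T = G ⊓ T :=
    sup_inf_eq_inf_of_disjoint_sup
      (Submodule.disjoint_span_singleton_of_notMem hT).symm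
  have hle : G ⊔ K ∙ x ≤ G :=
    hmax ⟨hZ.trans le_sup_left, (inf_eq E hxE).trans hE, (inf_eq S hxS).trans hS⟩ le_sup_left
  exact hxE (le_sup_left (a := G) (hle (Submodule.mem_sup_right
    (Submodule.mem_span_singleton_self x))))

theorem finrank_comap_add_finrank_of_codisjoint_range [FiniteDimensional K V]
    [FiniteDimensional K N] {f : V →ₗ[K] N} {p : Submodule K N}
    (h : Codisjoint (LinearMap.range f) p) :
    finrank K (p.comap f) + finrank K N = finrank K V + finrank K p := by
  have hsurj : LinearMap.range (p.mkQ ∘ₗ f) = ⊤ := by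
    rwa [LinearMap.range_comp, Submodule.map_mkQ_eq_top, sup_comm, ← codisjoint_iff]
  have hrank := (p.mkQ ∘ₗ f).finrank_range_add_finrank_ker
  rw [hsurj, finrank_top, LinearMap.ker_comp, Submodule.ker_mkQ] at hrank
  have := p.finrank_quotient_add_finrank
  omega

theorem finrank_range_add_le [FiniteDimensional K N] (f g : V →ₗ[K] N) :
    finrank K (LinearMap.range (f + g)) ≤
      finrank K (LinearMap.range f) + finrank K (LinearMap.range g) := by
  refine (Submodule.finrank_mono ?_).trans (Submodule.finrank_add_le_finrank_add_finrank _ _)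
  rintro _ ⟨x, rfl⟩
  exact Submodule.add_mem_sup ⟨x, rfl⟩ ⟨x, rfl⟩

theorem finrank_le_finrank_range_add_finrank_range [FiniteDimensional K V] {N' : Type*}
    [AddCommGroup N'] [Module K N'] {f : V →ₗ[K] N} {g : V →ₗ[K] N'}
    (h : Disjoint (LinearMap.ker f) (LinearMap.ker g)) :
    finrank K V ≤ finrank K (LinearMap.range f) + finrank K (LinearMap.range g) := by
  have hker := Submodule.finrank_add_finrank_le_of_disjoint h
  have hf := f.finrank_range_add_finrank_ker
  have hg := g.finrank_range_add_finrank_ker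
  omega

theorem injective_ofIsCompl {p q : Submodule K V} (hpq : IsCompl p q) {f : p →ₗ[K] N}
    {g : q →ₗ[K] N} (hf : Function.Injective f) (hg : Function.Injective g)
    (hfg : Disjoint (LinearMap.range f) (LinearMap.range g)) :
    Function.Injective (LinearMap.ofIsCompl hpq f g) := by
  have hcoprod : Function.Injective (f.coprod g) := by
    rw [← LinearMap.ker_eq_bot, LinearMap.ker_coprod_of_disjoint_range f g hfg,
      LinearMap.ker_eq_bot.2 hf, LinearMap.ker_eq_bot.2 hg, Submodule.prod_bot]
  exact hcoprod.comp (Submodule.prodEquivOfIsCompl p q hpq).symm.injective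

theorem exists_injective_extension [FiniteDimensional K V] [FiniteDimensional K N]
    (hVN : finrank K V ≤ finrank K N) {p : Submodule K V} {f : p →ₗ[K] N}
    (hf : Function.Injective f) :
    ∃ g : V →ₗ[K] N, Function.Injective g ∧ g ∘ₗ p.subtype = f := by
  obtain ⟨q, hpq⟩ := p.exists_isCompl
  obtain ⟨D, hD⟩ := (LinearMap.range f).exists_isCompl
  have hqD : finrank K q ≤ finrank K D := by
    have hsource := Submodule.finrank_add_eq_of_isCompl hpq
    have htarget := Submodule.finrank_add_eq_of_isCompl hD
    have hrange := LinearMap.finrank_range_of_inj hf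
    omega
  obtain ⟨j, hj⟩ := finrank_le_iff_exists_linearMap.1 hqD
  refine ⟨LinearMap.ofIsCompl hpq f (D.subtype ∘ₗ j), injective_ofIsCompl hpq hf
    (D.injective_subtype.comp hj) (hD.disjoint.mono_right ?_), ?_⟩
  · exact (LinearMap.range_comp_le_range _ _).trans_eq D.range_subtype
  · ext x
    exact LinearMap.ofIsCompl_apply_left hpq x

theorem exists_eqOn_disjoint_ker [FiniteDimensional K N] (f : V →ₗ[K] N) (p q : Submodule K V)
    [FiniteDimensional K q] (hqN : finrank K q ≤ finrank K N)
    (hf : Disjoint (p ⊓ q) (LinearMap.ker f)) :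
    ∃ l : V →ₗ[K] N, Set.EqOn l f p ∧ Disjoint q (LinearMap.ker l) := by
  have hinj : Function.Injective ((f.domRestrict q).domRestrict (p.comap q.subtype)) := by
    rw [LinearMap.injective_domRestrict_iff, Submodule.disjoint_def]
    exact fun x hxp hxf ↦ Subtype.ext (Submodule.disjoint_def.1 hf x ⟨hxp, x.2⟩ hxf)
  obtain ⟨g, hg, hgf⟩ := exists_injective_extension hqN hinj
  have hcompat (x : p) (y : q) (hxy : (x : V) = y) : f.domRestrict p x = g y := by
    have hy : (y : V) ∈ p := hxy ▸ x.2
    calc f x = f y := by rw [hxy]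
      _ = g y := (LinearMap.congr_fun hgf ⟨y, hy⟩).symm
  let fp : V →ₗ.[K] N := ⟨p, f.domRestrict p⟩
  let gq : V →ₗ.[K] N := ⟨q, g⟩
  obtain ⟨l, hl⟩ := (fp.sup gq hcompat).toFun.exists_extend
  have hlp (x : p) : l x = f x :=
    (LinearMap.congr_fun hl ⟨x, Submodule.mem_sup_left x.2⟩).trans
      ((fp.left_le_sup gq hcompat).2 (x := x) rfl).symm
  have hlq (x : q) : l x = g x :=
    (LinearMap.congr_fun hl ⟨x, Submodule.mem_sup_right x.2⟩).trans
      ((fp.right_le_sup gq hcompat).2 (x := x) rfl).symm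
  refine ⟨l, fun x hx ↦ hlp ⟨x, hx⟩, Submodule.disjoint_def.2 fun x hx hlx ↦ ?_⟩
  have hgx : g ⟨x, hx⟩ = 0 := (hlq ⟨x, hx⟩).symm.trans hlx
  exact congrArg Subtype.val ((map_eq_zero_iff g hg).1 hgx)

theorem exists_disjoint_ker_disjoint_map [FiniteDimensional K V] [FiniteDimensional K N]
    {N' : Type*} [AddCommGroup N'] [Module K N'] {f : V →ₗ[K] N} {g : V →ₗ[K] N'}
    {S : Submodule K N} (hfg : Disjoint (LinearMap.ker f) (LinearMap.ker g))
    (hS : Codisjoint (LinearMap.range f) S) :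
    ∃ G : Submodule K V, Disjoint G (LinearMap.ker g) ∧ Disjoint (G.map f) S ∧
      (finrank K G = finrank K (LinearMap.range g) ∨
        finrank K G + finrank K (LinearMap.range f) + finrank K S =
          finrank K V + finrank K N) := by
  obtain ⟨G, -, hGS, hGg, hcod⟩ := exists_ge_inf_eq_inf_and_codisjoint_or_codisjoint
    (LinearMap.ker f) (S.comap f) (LinearMap.ker g)
  have hker : LinearMap.ker f ≤ S.comap f := Submodule.comap_mono bot_le
  rw [inf_eq_left.2 hker] at hGS
  have hdisj : Disjoint G (LinearMap.ker g) := disjoint_iff.2 (hGg.trans hfg.eq_bot)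
  refine ⟨G, hdisj, ?_, ?_⟩
  · rw [disjoint_iff, Submodule.map_inf_eq_map_inf_comap, hGS, ← LinearMap.le_ker_iff_map]
  have hf := f.finrank_range_add_finrank_ker
  have hg := g.finrank_range_add_finrank_ker
  rcases hcod with hcod | hcod
  · have hcomap := finrank_comap_add_finrank_of_codisjoint_range hS
    have hsup := Submodule.finrank_sup_add_finrank_inf_eq G (S.comap f)
    rw [hcod.eq_top, finrank_top, hGS] at hsup
    omega
  · have hsum := Submodule.finrank_add_eq_of_isCompl ⟨hdisj, hcod⟩
    omega

end Submodule

section BlockMap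

variable {R V V' N N' : Type*} [Ring R] [AddCommGroup V] [Module R V]
  [AddCommGroup V'] [Module R V'] [AddCommGroup N] [Module R N] [AddCommGroup N'] [Module R N']

/-- The linear map `V × N → V' × N'` with block matrix `[[p₄, p₃], [p₂, p₁]]`. -/
def blockMap (p₄ : V →ₗ[R] V') (p₃ : N →ₗ[R] V') (p₂ : V →ₗ[R] N') (p₁ : N →ₗ[R] N') :
    V × N →ₗ[R] V' × N' :=
  (p₄.coprod p₃).prod (p₂.coprod p₁)

variable {p₄ : V →ₗ[R] V'} {p₃ : N →ₗ[R] V'} {p₂ : V →ₗ[R] N'} {p₁ : N →ₗ[R] N'}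

theorem eq_zero_of_injective_blockMap (h : Function.Injective (blockMap p₄ p₃ p₂ p₁)) {x : V}
    {y : N} (hV : p₄ x + p₃ y = 0) (hN : p₂ x + p₁ y = 0) : x = 0 ∧ y = 0 :=
  Prod.mk_eq_zero.1 ((map_eq_zero_iff _ h).1 (Prod.ext hV hN))

theorem disjoint_ker_left_of_injective_blockMap
    (h : Function.Injective (blockMap p₄ p₃ p₂ p₁)) :
    Disjoint (LinearMap.ker p₂) (LinearMap.ker p₄) :=
  Submodule.disjoint_def.2 fun x (h₂ : p₂ x = 0) (h₄ : p₄ x = 0) ↦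
    (eq_zero_of_injective_blockMap h (x := x) (y := 0) (by simp [h₄]) (by simp [h₂])).1

theorem disjoint_ker_right_of_injective_blockMap
    (h : Function.Injective (blockMap p₄ p₃ p₂ p₁)) :
    Disjoint (LinearMap.ker p₁) (LinearMap.ker p₃) :=
  Submodule.disjoint_def.2 fun y (h₁ : p₁ y = 0) (h₃ : p₃ y = 0) ↦
    (eq_zero_of_injective_blockMap h (x := 0) (y := y) (by simp [h₃]) (by simp [h₁])).2

theorem codisjoint_range_of_surjective_blockMap
    (h : Function.Surjective (blockMap p₄ p₃ p₂ p₁)) :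
    Codisjoint (LinearMap.range p₂) (LinearMap.range p₁) := by
  rw [codisjoint_iff, ← LinearMap.range_coprod, LinearMap.range_eq_top]
  exact Prod.snd_surjective.comp h

theorem injective_sub_comp_of_disjoint {l : V' →ₗ[R] N'}
    (h : Disjoint (LinearMap.ker p₁) (LinearMap.ker p₃))
    (hl : Disjoint (LinearMap.range l) (LinearMap.range p₁))
    (hl_ker : Disjoint ((LinearMap.ker p₁).map p₃) (LinearMap.ker l)) :
    Function.Injective (p₁ - l ∘ₗ p₃) := by
  refine (injective_iff_map_eq_zero _).2 fun y hy ↦ ?_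
  have hy : l (p₃ y) = p₁ y := (sub_eq_zero.1 hy).symm
  have hly : l (p₃ y) = 0 := Submodule.disjoint_def.1 hl _ ⟨_, rfl⟩ ⟨y, hy.symm⟩
  have hy₁ : p₁ y = 0 := hy.symm.trans hly
  have hy₃ : p₃ y = 0 := Submodule.disjoint_def.1 hl_ker _ ⟨y, hy₁, rfl⟩ hly
  exact Submodule.disjoint_def.1 h y hy₁ hy₃

theorem disjoint_map_inf_map_ker_of_injective_blockMap {W : Type*} [AddCommGroup W] [Module R W]
    (hP : Function.Injective (blockMap p₄ p₃ p₂ p₁)) {G : Submodule R V} {f : V' →ₗ[R] W}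
    (hf : ∀ x ∈ G, f (p₄ x) = 0 → p₂ x = 0) :
    Disjoint (G.map p₄ ⊓ (LinearMap.ker p₁).map p₃) (LinearMap.ker f) := by
  rw [Submodule.disjoint_def]
  rintro _ ⟨⟨x, hxG, rfl⟩, y, hy : p₁ y = 0, hyx⟩ hfx
  have hx : x = 0 := (eq_zero_of_injective_blockMap hP (x := x) (y := -y)
    (by simp [hyx]) (by simp [hf x hxG hfx, hy])).1
  rw [hx, map_zero]

end BlockMap

section Shear

variable {K V V' N N' : Type*} [DivisionRing K] [AddCommGroup V] [Module K V]
  [AddCommGroup V'] [Module K V'] [AddCommGroup N] [Module K N] [AddCommGroup N'] [Module K N']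
  {p₄ : V →ₗ[K] V'} {p₃ : N →ₗ[K] V'} {p₂ : V →ₗ[K] N'} {p₁ : N →ₗ[K] N'}

theorem exists_range_le_and_disjoint_ker [FiniteDimensional K N] [FiniteDimensional K N']
    (hP : Function.Injective (blockMap p₄ p₃ p₂ p₁)) {G : Submodule K V} {D : Submodule K N'}
    (hG : Disjoint G (LinearMap.ker p₄)) (hGD : G.map p₂ ≤ D)
    (hD : finrank K (LinearMap.ker p₁) = finrank K D) :
    ∃ l : V' →ₗ[K] N', LinearMap.range l = D ∧
      Disjoint ((LinearMap.ker p₁).map p₃) (LinearMap.ker l) ∧ ∀ x ∈ G, l (p₄ x) = p₂ x := by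
  let p₂' : G →ₗ[K] D := p₂.restrict fun x hx ↦ hGD ⟨x, hx, rfl⟩
  obtain ⟨r, hr⟩ := (p₄.domRestrict G).exists_leftInverse_of_injective
    (LinearMap.ker_eq_bot.2 (LinearMap.injective_domRestrict_iff.2 hG))
  have hr (x : G) : p₂' (r (p₄ x)) = p₂' x := congrArg p₂' (LinearMap.congr_fun hr x)
  have hU : finrank K ((LinearMap.ker p₁).map p₃) = finrank K D :=
    (finrank_map_eq_of_disjoint_ker (disjoint_ker_right_of_injective_blockMap hP)).trans hD
  obtain ⟨l, hlG, hl⟩ := exists_eqOn_disjoint_ker (p₂' ∘ₗ r) (G.map p₄) _ hU.le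
    (disjoint_map_inf_map_ker_of_injective_blockMap hP fun x hx h ↦
      congrArg Subtype.val ((hr ⟨x, hx⟩).symm.trans h))
  have hl_range : LinearMap.range l = ⊤ := by
    refine top_le_iff.1 (le_of_eq_of_le (Submodule.eq_top_of_finrank_eq ?_).symm
      (LinearMap.map_le_range (p := (LinearMap.ker p₁).map p₃)))
    rw [finrank_map_eq_of_disjoint_ker hl, hU]
  refine ⟨D.subtype ∘ₗ l, ?_, ?_, fun x hx ↦ ?_⟩
  · rw [LinearMap.range_comp, hl_range, Submodule.map_subtype_top]
  · rwa [LinearMap.ker_comp_of_ker_eq_bot _ D.ker_subtype]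
  · exact congrArg Subtype.val ((hlG ⟨x, hx, rfl⟩).trans (hr ⟨x, hx⟩))

theorem exists_injective_sub_comp_and_le_ker [FiniteDimensional K N] [FiniteDimensional K N']
    (hNN' : finrank K N = finrank K N')
    (hP : Function.Injective (blockMap p₄ p₃ p₂ p₁)) {G : Submodule K V}
    (hG₄ : Disjoint G (LinearMap.ker p₄)) (hG₂ : Disjoint (G.map p₂) (LinearMap.range p₁)) :
    ∃ l : V' →ₗ[K] N', Function.Injective (p₁ - l ∘ₗ p₃) ∧
      finrank K (LinearMap.range l) + finrank K (LinearMap.range p₁) = finrank K N' ∧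
      G ≤ LinearMap.ker (p₂ - l ∘ₗ p₄) := by
  obtain ⟨D, hGD, hD⟩ := hG₂.exists_isCompl
  have hD_finrank := Submodule.finrank_add_eq_of_isCompl hD
  have hp₁ := p₁.finrank_range_add_finrank_ker
  obtain ⟨l, rfl, hl_ker, hlG⟩ := exists_range_le_and_disjoint_ker hP hG₄ hGD (by omega)
  exact ⟨l, injective_sub_comp_of_disjoint (disjoint_ker_right_of_injective_blockMap hP)
    hD.disjoint hl_ker, hD_finrank, fun x hx ↦ sub_eq_zero.2 (hlG x hx).symm⟩

theorem max_le_finrank_range_sub_comp_add [FiniteDimensional K V] [FiniteDimensional K V']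
    [FiniteDimensional K N'] (h : Disjoint (LinearMap.ker p₂) (LinearMap.ker p₄))
    (l : V' →ₗ[K] N') :
    max (finrank K (LinearMap.range p₂))
        (finrank K V - finrank K (LinearMap.range p₄) + finrank K (LinearMap.range l)) ≤
      finrank K (LinearMap.range (p₂ - l ∘ₗ p₄)) + finrank K (LinearMap.range l) := by
  refine max_le ?_ ?_
  · have hadd := finrank_range_add_le (p₂ - l ∘ₗ p₄) (l ∘ₗ p₄)
    have hcomp := Submodule.finrank_mono (LinearMap.range_comp_le_range p₄ l)
    rw [sub_add_cancel] at hadd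
    omega
  · have hker : Disjoint (LinearMap.ker (p₂ - l ∘ₗ p₄)) (LinearMap.ker p₄) := by
      refine Submodule.disjoint_def.2 fun x (hx : p₂ x - l (p₄ x) = 0) (h₄ : p₄ x = 0) ↦ ?_
      exact Submodule.disjoint_def.1 h x (by simpa [h₄] using hx) h₄
    have := finrank_le_finrank_range_add_finrank_range hker
    omega

theorem exists_injective_sub_comp_and_finrank_range_eq [FiniteDimensional K V]
    [FiniteDimensional K V'] [FiniteDimensional K N] [FiniteDimensional K N']
    (hNN' : finrank K N = finrank K N') (hP : Function.Bijective (blockMap p₄ p₃ p₂ p₁)) :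
    ∃ l : V' →ₗ[K] N', Function.Injective (p₁ - l ∘ₗ p₃) ∧
      finrank K (LinearMap.range l) + finrank K (LinearMap.range p₁) = finrank K N' ∧
      finrank K (LinearMap.range (p₂ - l ∘ₗ p₄)) + finrank K (LinearMap.range l) =
        max (finrank K (LinearMap.range p₂))
          (finrank K N' + finrank K V - finrank K (LinearMap.range p₁) -
            finrank K (LinearMap.range p₄)) := by
  have h₂₄ := disjoint_ker_left_of_injective_blockMap hP.injective
  obtain ⟨G, hG₄, hG₂, hG⟩ := exists_disjoint_ker_disjoint_map h₂₄
    (codisjoint_range_of_surjective_blockMap hP.surjective)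
  obtain ⟨l, hinj, hl, hGl⟩ := exists_injective_sub_comp_and_le_ker hNN' hP.injective hG₄ hG₂
  refine ⟨l, hinj, hl, ?_⟩
  have hlower := max_le_finrank_range_sub_comp_add h₂₄ l
  have hupper := Submodule.finrank_mono hGl
  have hrank := (p₂ - l ∘ₗ p₄).finrank_range_add_finrank_ker
  have hrank₄ := p₄.finrank_range_add_finrank_ker
  rcases hG with hG | hG <;> omega

end Shear

section Matrix

open Matrix

theorem fromBlocks_eq_lower_mul_upper_mul_lower {m m' n n' R : Type*} [Fintype m] [Fintype m']
    [Fintype n] [Fintype n'] [DecidableEq m] [DecidableEq m'] [DecidableEq n] [DecidableEq n']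
    [Ring R] {P₄ : Matrix m m' R} {P₃ : Matrix m n' R} {P₂ : Matrix n m' R} {P₁ : Matrix n n' R}
    {A : Matrix n m R} {B : Matrix n' m' R} (h : (P₁ - A * P₃) * B = P₂ - A * P₄) :
    fromBlocks P₄ P₃ P₂ P₁ =
      (fromBlocks 1 0 A 1 : Matrix (m ⊕ n) (m ⊕ n) R) *
        fromBlocks (P₄ - P₃ * B) P₃ 0 (P₁ - A * P₃) *
        (fromBlocks 1 0 B 1 : Matrix (m' ⊕ n') (m' ⊕ n') R) := by
  have hP₂ : A * (P₄ - P₃ * B) + P₁ * B = P₂ := by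
    rw [Matrix.sub_mul, sub_eq_iff_eq_add] at h
    rw [h, Matrix.mul_sub, Matrix.mul_assoc]
    abel
  simp [fromBlocks_multiply, hP₂]

theorem mulVecLin_sub_comp {k m n R : Type*} [Fintype k] [Fintype m] [CommRing R]
    (X : Matrix n k R) (Y : Matrix n m R) (Z : Matrix m k R) :
    X.mulVecLin - Y.mulVecLin ∘ₗ Z.mulVecLin = (X - Y * Z).mulVecLin := by
  rw [← mulVecLin_mul]
  exact LinearMap.ext fun v ↦ (sub_mulVec X (Y * Z) v).symm

theorem blockMap_mulVecLin {m m' n n' R : Type*} [Fintype m'] [Fintype n'] [CommRing R]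
    (P₄ : Matrix m m' R) (P₃ : Matrix m n' R) (P₂ : Matrix n m' R) (P₁ : Matrix n n' R) :
    blockMap P₄.mulVecLin P₃.mulVecLin P₂.mulVecLin P₁.mulVecLin =
      LinearEquiv.sumArrowLequivProdArrow m n R R ∘ₗ (fromBlocks P₄ P₃ P₂ P₁).mulVecLin ∘ₗ
        (LinearEquiv.sumArrowLequivProdArrow m' n' R R).symm :=
  LinearMap.ext fun z ↦ (congrArg (LinearEquiv.sumArrowLequivProdArrow m n R R)
    (fromBlocks_mulVec P₄ P₃ P₂ P₁ (Sum.elim z.1 z.2))).symm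

variable {m n : Type*} [Fintype m] [Fintype n] [DecidableEq m] [DecidableEq n]

theorem bijective_blockMap_mulVecLin {R : Type*} [CommRing R] {P₄ : Matrix m m R}
    {P₃ : Matrix m n R} {P₂ : Matrix n m R} {P₁ : Matrix n n R}
    (hP : IsUnit (fromBlocks P₄ P₃ P₂ P₁)) :
    Function.Bijective (blockMap P₄.mulVecLin P₃.mulVecLin P₂.mulVecLin P₁.mulVecLin) := by
  have hmul : Function.Bijective (fromBlocks P₄ P₃ P₂ P₁).mulVecLin :=
    ⟨mulVec_injective_of_isUnit hP, mulVec_surjective_iff_isUnit.2 hP⟩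
  let e := LinearEquiv.sumArrowLequivProdArrow m n R R
  rw [blockMap_mulVecLin]
  exact e.bijective.comp (hmul.comp e.symm.bijective)

theorem stmt_1_general {K : Type*} [Field K] (P₄ : Matrix m m K) (P₃ : Matrix m n K)
    (P₂ : Matrix n m K) (P₁ : Matrix n n K) (hP : IsUnit (fromBlocks P₄ P₃ P₂ P₁)) :
    ∃ (L R : Matrix n m K) (C₄ : Matrix m m K) (C₃ : Matrix m n K) (C₁ : Matrix n n K),
      fromBlocks P₄ P₃ P₂ P₁ =
        fromBlocks 1 0 L 1 * fromBlocks C₄ C₃ 0 C₁ * fromBlocks 1 0 R 1 ∧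
      L.rank + P₁.rank = Fintype.card n ∧
      R.rank + L.rank = max P₂.rank (Fintype.card n + Fintype.card m - P₁.rank - P₄.rank) := by
  have hbij := bijective_blockMap_mulVecLin hP
  obtain ⟨l, hinj, hl, hr⟩ := exists_injective_sub_comp_and_finrank_range_eq rfl hbij
  obtain ⟨L, rfl⟩ : ∃ L : Matrix n m K, L.mulVecLin = l := Matrix.toLin'.surjective l
  rw [mulVecLin_sub_comp] at hinj hr
  have hC : IsUnit (P₁ - L * P₃) := mulVec_injective_iff_isUnit.1 hinj
  have hC_det := (isUnit_iff_isUnit_det _).1 hC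
  let R := (P₁ - L * P₃)⁻¹ * (P₂ - L * P₄)
  have hR : R.rank = (P₂ - L * P₄).rank :=
    rank_mul_eq_right_of_isUnit_det _ _ (isUnit_nonsing_inv_det _ hC_det)
  refine ⟨L, R, P₄ - P₃ * R, P₃, P₁ - L * P₃,
    fromBlocks_eq_lower_mul_upper_mul_lower (mul_nonsing_inv_cancel_left _ _ hC_det), ?_, ?_⟩
  · exact hl.trans (finrank_fintype_fun_eq_card K)
  · rw [hR]
    simpa only [Matrix.rank, finrank_fintype_fun_eq_card] using hr

end Matrix

/-- Theorem 2 (optimal solution): every invertible blocked matrix `P` admits a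
decomposition (3) with `rank L + r₁ = n` (i.e. `rank L = n - r₁`) and
`rank R + rank L = max (r₂, n + m - r₁ - r₄)`. -/
theorem stmt_1 {K : Type*} [Field K] {m n : ℕ}
    (P₄ : Matrix (Fin m) (Fin m) K) (P₃ : Matrix (Fin m) (Fin n) K)
    (P₂ : Matrix (Fin n) (Fin m) K) (P₁ : Matrix (Fin n) (Fin n) K)
    (hP : IsUnit (Matrix.fromBlocks P₄ P₃ P₂ P₁)) :
    ∃ (L R : Matrix (Fin n) (Fin m) K) (C₄ : Matrix (Fin m) (Fin m) K)
      (C₃ : Matrix (Fin m) (Fin n) K) (C₁ : Matrix (Fin n) (Fin n) K),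
      Matrix.fromBlocks P₄ P₃ P₂ P₁ =
        Matrix.fromBlocks 1 0 L 1 * Matrix.fromBlocks C₄ C₃ 0 C₁ *
          Matrix.fromBlocks 1 0 R 1 ∧
      L.rank + P₁.rank = n ∧
      R.rank + L.rank = max P₂.rank (n + m - P₁.rank - P₄.rank) := by
  simpa only [Fintype.card_fin] using stmt_1_general P₄ P₃ P₂ P₁ hP
end

section
/- Let l and r be natural numbers satisfying l + r₁ ≥ n, r + r₄ ≥ m, and r + l = max(r₂, n + m − r₁ − r₄). Then there exists a decomposition (3) of P with rank L = l and rank R = r. -/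
/-!
Adding `X` times the upper block row of `P` to the lower one turns the lower blocks into
`P₂ + X P₄` and `P₁ + X P₃`. Once `P₁ + X P₃` is invertible, `P` factors with `L = -X` and
`rank R = rank (P₂ + X P₄)`. Such an `X` of rank at most `l` is a sum of `l` rank-one matrices
`u vᵀ`: each raises the rank of `P₁` until it is maximal and, when `r₂ = l + r`, also lowers the
rank of `P₂` by a Wedderburn reduction. Both are possible at once because, `P` being invertible,
there is a row vector `(v, w)` with `v P₄ + w P₂ = 0` and `v P₃ + w P₁` prescribed.

Every factorization satisfies `l + r₁ ≥ n`, `r + r₄ ≥ m` and `l + r ≥ r₂`, so when `r + l` is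
minimal the estimates `rank L ≤ l` and `rank R ≤ r` are equalities.
-/

open Matrix Module

section Rank

variable {K m n p : Type*} [Field K] [Fintype n]

theorem rank_matrix_add_le [Finite m] (A B : Matrix m n K) :
    (A + B).rank ≤ A.rank + B.rank := by
  rw [Matrix.rank, mulVecLin_add]
  exact (Submodule.finrank_mono (LinearMap.range_add_le _ _)).trans
    (Submodule.finrank_add_le_finrank_add_finrank _ _)

theorem card_le_rank_add_rank_of_isUnit_add [DecidableEq n] {A B : Matrix n n K}
    (h : IsUnit (A + B)) : Fintype.card n ≤ A.rank + B.rank :=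
  (rank_of_isUnit _ h).ge.trans (rank_matrix_add_le A B)

theorem range_mulVecLin_eq_top_iff [Fintype m] {A : Matrix m n K} :
    LinearMap.range A.mulVecLin = ⊤ ↔ A.rank = Fintype.card m := by
  rw [Matrix.rank, ← finrank_fintype_fun_eq_card K]
  exact ⟨fun h ↦ by rw [h, finrank_top], Submodule.eq_top_of_finrank_eq⟩

theorem isUnit_of_rank_eq_card [DecidableEq n] {A : Matrix n n K}
    (h : A.rank = Fintype.card n) : IsUnit A :=
  mulVec_surjective_iff_isUnit.mp (LinearMap.range_eq_top.mp (range_mulVecLin_eq_top_iff.mpr h))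

theorem exists_ne_zero_mulVec_eq_smul (A : Matrix n n K) {u : n → K}
    (hu : u ≠ 0) : ∃ k ≠ 0, ∃ a : K, A *ᵥ k = a • u := by
  classical
  by_cases hA : IsUnit A
  · obtain ⟨k, rfl⟩ := mulVec_surjective_iff_isUnit.mpr hA u
    exact ⟨k, fun hk ↦ hu (by rw [hk, mulVec_zero]), 1, (one_smul K _).symm⟩
  · rw [isUnit_iff_isUnit_det, isUnit_iff_ne_zero, not_not] at hA
    obtain ⟨k, hk, hAk⟩ := exists_mulVec_eq_zero_iff.mpr hA
    exact ⟨k, hk, 0, by rw [hAk, zero_smul]⟩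

theorem not_range_le_map_ker_of_card_lt_rank_add_rank {A : Matrix m n K}
    {B : Matrix p n K} (h : Fintype.card n < A.rank + B.rank) :
    ¬ LinearMap.range A.mulVecLin ≤ (LinearMap.ker B.mulVecLin).map A.mulVecLin := by
  intro hle
  have hA : A.rank ≤ finrank K (LinearMap.ker B.mulVecLin) :=
    (Submodule.finrank_mono hle).trans (Submodule.finrank_map_le _ _)
  have hB : B.rank + finrank K (LinearMap.ker B.mulVecLin) = Fintype.card n := by
    rw [Matrix.rank, LinearMap.finrank_range_add_finrank_ker, finrank_fintype_fun_eq_card]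
  omega

end Rank

section RankOneUpdate

variable {K m n : Type*} [Fintype n]

theorem add_vecMulVec_mulVec [CommSemiring K] (A : Matrix m n K) (u : m → K) (g x : n → K) :
    (A + vecMulVec u g) *ᵥ x = A *ᵥ x + (g ⬝ᵥ x) • u := by
  rw [add_mulVec, vecMulVec_mulVec, op_smul_eq_smul]

variable [Field K]

theorem range_sup_span_le_range_add_vecMulVec {A : Matrix m n K} {u : m → K} {g k : n → K} {c : K}
    (hc : c ≠ 0) (hk : (A + vecMulVec u g) *ᵥ k = c • u) :
    LinearMap.range A.mulVecLin ⊔ K ∙ u ≤ LinearMap.range (A + vecMulVec u g).mulVecLin := by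
  have hu : u ∈ LinearMap.range (A + vecMulVec u g).mulVecLin :=
    ⟨c⁻¹ • k, by rw [mulVecLin_apply, mulVec_smul, hk, inv_smul_smul₀ hc]⟩
  refine sup_le ?_ ((Submodule.span_singleton_le_iff_mem _ _).mpr hu)
  rintro _ ⟨x, rfl⟩
  rw [mulVecLin_apply, eq_sub_of_add_eq (add_vecMulVec_mulVec A u g x).symm]
  exact Submodule.sub_mem _ ⟨x, rfl⟩ (Submodule.smul_mem _ _ hu)

theorem min_card_rank_succ_le_rank_add_vecMulVec [Fintype m] {A : Matrix m n K} {u : m → K}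
    {g k : n → K} {c : K} (hc : c ≠ 0) (hk : (A + vecMulVec u g) *ᵥ k = c • u)
    (hu : A.rank < Fintype.card m → u ∉ LinearMap.range A.mulVecLin) :
    min (Fintype.card m) (A.rank + 1) ≤ (A + vecMulVec u g).rank := by
  have hle := range_sup_span_le_range_add_vecMulVec hc hk
  rcases A.rank_le_card_height.lt_or_eq with hA | hA
  · refine (min_le_right _ _).trans (Submodule.finrank_lt_finrank_of_lt ?_)
    exact (left_lt_sup.mpr fun h ↦ hu hA
      ((Submodule.span_singleton_le_iff_mem _ _).mp h)).trans_le hle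
  · exact (min_le_left _ _).trans (hA.ge.trans (Submodule.finrank_mono (le_sup_left.trans hle)))

/-- Wedderburn's rank reduction. -/
theorem rank_sub_vecMulVec_mulVec_vecMul_lt [Fintype m] {A : Matrix m n K} {w : m → K} {y : n → K}
    (h : w ⬝ᵥ A *ᵥ y = 1) : (A - vecMulVec (A *ᵥ y) (w ᵥ* A)).rank < A.rank := by
  have hmulVec (x : n → K) : (A - vecMulVec (A *ᵥ y) (w ᵥ* A)) *ᵥ x =
      A *ᵥ (x - (w ⬝ᵥ A *ᵥ x) • y) := by
    rw [sub_mulVec, vecMulVec_mulVec, op_smul_eq_smul, ← dotProduct_mulVec, mulVec_sub, mulVec_smul]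
  refine Submodule.finrank_lt_finrank_of_lt
    (SetLike.lt_iff_le_and_exists.mpr ⟨?_, A *ᵥ y, LinearMap.mem_range_self _ y, ?_⟩)
  · rintro _ ⟨x, rfl⟩
    exact ⟨x - (w ⬝ᵥ A *ᵥ x) • y, (hmulVec x).symm⟩
  · rintro ⟨x, hx⟩
    have hw : w ⬝ᵥ A *ᵥ y = 0 := by
      rw [← hx, mulVecLin_apply, hmulVec, mulVec_sub, mulVec_smul, dotProduct_sub, dotProduct_smul,
        h, smul_eq_mul, mul_one, sub_self]
    exact one_ne_zero (h.symm.trans hw)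

end RankOneUpdate

theorem exists_dotProduct_eq_one_and_ne_zero {K n : Type*} [Field K] [Fintype n] {a b : n → K}
    (ha : a ≠ 0) (hb : b ≠ 0) : ∃ z, z ⬝ᵥ a = 1 ∧ z ⬝ᵥ b ≠ 0 := by
  have hker {c : n → K} (hc : c ≠ 0) : ¬ ⊤ ≤ LinearMap.ker (dotProductBilin K K c) := fun h ↦
    hc (dotProduct_eq_zero c fun z ↦ h (Submodule.mem_top (x := z)))
  obtain ⟨z, -, hz⟩ := Set.not_subset.mp
    (mt AddSubgroupClass.subset_union.mp (not_or.mpr ⟨hker ha, hker hb⟩))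
  obtain ⟨hza, hzb⟩ : z ⬝ᵥ a ≠ 0 ∧ z ⬝ᵥ b ≠ 0 := by
    simpa [dotProduct_comm] using hz
  refine ⟨(z ⬝ᵥ a)⁻¹ • z, ?_, ?_⟩
  · rw [smul_dotProduct, smul_eq_mul, inv_mul_cancel₀ hza]
  · rw [smul_dotProduct]
    exact smul_ne_zero (inv_ne_zero hza) hzb

section InvertibleBlocks

variable {K m n : Type*} [CommRing K] [Fintype m] [Fintype n] [DecidableEq m] [DecidableEq n]
  {P₄ : Matrix m m K} {P₃ : Matrix m n K} {P₂ : Matrix n m K} {P₁ : Matrix n n K}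

theorem exists_mulVec_add_mulVec_eq (hP : IsUnit (fromBlocks P₄ P₃ P₂ P₁))
    (a : m → K) (b : n → K) :
    ∃ (y : m → K) (q : n → K), P₄ *ᵥ y + P₃ *ᵥ q = a ∧ P₂ *ᵥ y + P₁ *ᵥ q = b := by
  obtain ⟨x, hx⟩ := mulVec_surjective_iff_isUnit.mpr hP (Sum.elim a b)
  rw [fromBlocks_mulVec] at hx
  exact ⟨x ∘ Sum.inl, x ∘ Sum.inr, Sum.elim_eq_iff.mp hx⟩

theorem exists_vecMul_add_vecMul_eq (hP : IsUnit (fromBlocks P₄ P₃ P₂ P₁))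
    (a : m → K) (b : n → K) :
    ∃ (v : m → K) (w : n → K), v ᵥ* P₄ + w ᵥ* P₂ = a ∧ v ᵥ* P₃ + w ᵥ* P₁ = b := by
  obtain ⟨t, ht : t ᵥ* _ = _⟩ := vecMul_surjective_iff_isUnit.mpr hP (Sum.elim a b)
  rw [vecMul_fromBlocks] at ht
  exact ⟨t ∘ Sum.inl, t ∘ Sum.inr, Sum.elim_eq_iff.mp ht⟩

theorem isUnit_fromBlocks_add_mul (hP : IsUnit (fromBlocks P₄ P₃ P₂ P₁)) (X : Matrix n m K) :
    IsUnit (fromBlocks P₄ P₃ (P₂ + X * P₄) (P₁ + X * P₃)) := by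
  have hmul : fromBlocks P₄ P₃ (P₂ + X * P₄) (P₁ + X * P₃) =
      fromBlocks 1 0 X 1 * fromBlocks P₄ P₃ P₂ P₁ := by
    simp [fromBlocks_multiply, add_comm]
  rw [hmul]
  exact (isUnit_fromBlocks_zero₁₂.mpr ⟨isUnit_one, isUnit_one⟩).mul hP

end InvertibleBlocks

section RowOperation

variable {K m n : Type*} [Field K] [Fintype m] [Fintype n] [DecidableEq m] [DecidableEq n]
  {P₄ : Matrix m m K} {P₃ : Matrix m n K} {P₂ : Matrix n m K} {P₁ : Matrix n n K}

theorem not_range_le_range_of_rank_lt_card (hP : IsUnit (fromBlocks P₄ P₃ P₂ P₁))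
    (h : P₁.rank < Fintype.card n) :
    ¬ LinearMap.range P₂.mulVecLin ≤ LinearMap.range P₁.mulVecLin := by
  refine fun hle ↦ h.ne (range_mulVecLin_eq_top_iff.mp (eq_top_iff.mpr fun b _ ↦ ?_))
  obtain ⟨y, q, -, rfl⟩ := exists_mulVec_add_mulVec_eq hP 0 b
  exact Submodule.add_mem _ (hle ⟨y, rfl⟩) ⟨q, rfl⟩

theorem exists_vecMulVec_rank_succ_le_and_rank_le (hP : IsUnit (fromBlocks P₄ P₃ P₂ P₁)) :
    ∃ (u : n → K) (v : m → K),
      min (Fintype.card n) (P₁.rank + 1) ≤ (P₁ + vecMulVec u v * P₃).rank ∧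
      (P₂ + vecMulVec u v * P₄).rank ≤ P₂.rank := by
  rcases P₁.rank_le_card_height.lt_or_eq with h | h
  · obtain ⟨_, ⟨y, rfl⟩, hu⟩ :=
      SetLike.not_le_iff_exists.mp (not_range_le_range_of_rank_lt_card hP h)
    obtain ⟨k, hk, hP₁k⟩ : ∃ k ≠ 0, P₁ *ᵥ k = 0 := by
      rw [exists_mulVec_eq_zero_iff]
      by_contra hdet
      exact h.ne (rank_of_isUnit _ ((isUnit_iff_isUnit_det _).mpr (Ne.isUnit hdet)))
    obtain ⟨z, -, hzk⟩ := exists_dotProduct_eq_one_and_ne_zero hk hk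
    obtain ⟨v, w, -, hvw⟩ := exists_vecMul_add_vecMul_eq hP 0 z
    have hvk : v ᵥ* P₃ ⬝ᵥ k ≠ 0 := by
      rwa [← hvw, add_dotProduct, ← dotProduct_mulVec w, hP₁k, dotProduct_zero, add_zero] at hzk
    refine ⟨P₂ *ᵥ y, v, ?_, ?_⟩
    · rw [vecMulVec_mul]
      exact min_card_rank_succ_le_rank_add_vecMulVec hvk
        (by rw [add_vecMulVec_mulVec, hP₁k, zero_add]) fun _ ↦ hu
    · have hmul : P₂ + vecMulVec (P₂ *ᵥ y) v * P₄ = P₂ * (1 + vecMulVec y v * P₄) := by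
        rw [Matrix.mul_add, Matrix.mul_one, ← Matrix.mul_assoc, mul_vecMulVec]
      exact hmul ▸ rank_mul_le_left _ _
  · exact ⟨0, 0, by simp [h], by simp⟩

theorem exists_vecMul_eq_zero_and_dotProduct_eq_one (hP : IsUnit (fromBlocks P₄ P₃ P₂ P₁))
    {u k : n → K} (hu : u ∉ (LinearMap.ker P₄.mulVecLin).map P₂.mulVecLin) (hk : k ≠ 0) :
    ∃ (v : m → K) (w : n → K), v ᵥ* P₄ + w ᵥ* P₂ = 0 ∧ w ⬝ᵥ u = 1 ∧
      (v ᵥ* P₃ + w ᵥ* P₁) ⬝ᵥ k ≠ 0 := by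
  obtain ⟨y, q, hyq, rfl⟩ := exists_mulVec_add_mulVec_eq hP 0 u
  have hq : q ≠ 0 := by
    rintro rfl
    rw [mulVec_zero, add_zero] at hyq
    exact hu ⟨y, hyq, by rw [mulVec_zero, add_zero, mulVecLin_apply]⟩
  obtain ⟨z, hzq, hzk⟩ := exists_dotProduct_eq_one_and_ne_zero hq hk
  obtain ⟨v, w, hvw, rfl⟩ := exists_vecMul_add_vecMul_eq hP 0 z
  refine ⟨v, w, hvw, ?_, hzk⟩
  calc w ⬝ᵥ (P₂ *ᵥ y + P₁ *ᵥ q)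
      = v ⬝ᵥ (P₄ *ᵥ y + P₃ *ᵥ q) + w ⬝ᵥ (P₂ *ᵥ y + P₁ *ᵥ q) := by
        rw [hyq, dotProduct_zero, zero_add]
    _ = (v ᵥ* P₄ + w ᵥ* P₂) ⬝ᵥ y + (v ᵥ* P₃ + w ᵥ* P₁) ⬝ᵥ q := by
        simp only [dotProduct_add, add_dotProduct, dotProduct_mulVec]
        abel
    _ = 1 := by rw [hvw, zero_dotProduct, zero_add, hzq]

theorem exists_vecMulVec_rank_succ_le_and_rank_lt (hP : IsUnit (fromBlocks P₄ P₃ P₂ P₁))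
    (h : Fintype.card m < P₂.rank + P₄.rank) :
    ∃ (u : n → K) (v : m → K),
      min (Fintype.card n) (P₁.rank + 1) ≤ (P₁ + vecMulVec u v * P₃).rank ∧
      (P₂ + vecMulVec u v * P₄).rank < P₂.rank := by
  have hker := not_range_le_map_ker_of_card_lt_rank_add_rank h
  obtain ⟨_, ⟨y, rfl⟩, huker, hu⟩ : ∃ u ∈ LinearMap.range P₂.mulVecLin,
      u ∉ (LinearMap.ker P₄.mulVecLin).map P₂.mulVecLin ∧
      (P₁.rank < Fintype.card n → u ∉ LinearMap.range P₁.mulVecLin) := by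
    by_cases hP₁ : P₁.rank < Fintype.card n
    · obtain ⟨u, hu, hu'⟩ := Set.not_subset.mp (mt AddSubgroupClass.subset_union.mp
        (not_or.mpr ⟨hker, not_range_le_range_of_rank_lt_card hP hP₁⟩))
      exact ⟨u, hu, fun hu₄ ↦ hu' (.inl hu₄), fun _ hu₁ ↦ hu' (.inr hu₁)⟩
    · obtain ⟨u, hu, hu₄⟩ := SetLike.not_le_iff_exists.mp hker
      exact ⟨u, hu, hu₄, fun h₁ ↦ absurd h₁ hP₁⟩
  obtain ⟨k, hk, a, hP₁k⟩ := exists_ne_zero_mulVec_eq_smul P₁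
    (ne_of_mem_of_not_mem (Submodule.zero_mem _) huker).symm
  obtain ⟨v, w, hvw, hwu, hvwk⟩ := exists_vecMul_eq_zero_and_dotProduct_eq_one hP huker hk
  rw [mulVecLin_apply] at hP₁k hwu
  have hmulVec : (P₁ + vecMulVec (P₂ *ᵥ y) (v ᵥ* P₃)) *ᵥ k =
      ((v ᵥ* P₃ + w ᵥ* P₁) ⬝ᵥ k) • P₂ *ᵥ y := by
    rw [add_vecMulVec_mulVec, add_dotProduct, ← dotProduct_mulVec w, hP₁k, dotProduct_smul, hwu,
      smul_eq_mul, mul_one, ← add_smul, add_comm]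
  refine ⟨P₂ *ᵥ y, v, ?_, ?_⟩
  · rw [vecMulVec_mul]
    exact min_card_rank_succ_le_rank_add_vecMulVec hvwk hmulVec hu
  · rw [vecMulVec_mul, eq_neg_of_add_eq_zero_left hvw, vecMulVec_neg, ← sub_eq_add_neg]
    exact rank_sub_vecMulVec_mulVec_vecMul_lt hwu

theorem exists_rank_le_and_isUnit_add_mul_and_rank_add_mul_le {l r : ℕ}
    (hP : IsUnit (fromBlocks P₄ P₃ P₂ P₁)) (hl : Fintype.card n ≤ l + P₁.rank)
    (hr : Fintype.card m ≤ r + P₄.rank) (hlr : P₂.rank ≤ l + r) :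
    ∃ X : Matrix n m K, X.rank ≤ l ∧ IsUnit (P₁ + X * P₃) ∧ (P₂ + X * P₄).rank ≤ r := by
  induction l generalizing P₂ P₁ with
  | zero =>
    have hP₁ : P₁.rank = Fintype.card n := P₁.rank_le_card_height.antisymm (by omega)
    exact ⟨0, by simp, by simpa using isUnit_of_rank_eq_card hP₁, by simpa using hlr⟩
  | succ l ih =>
    obtain ⟨u, v, hl', hlr'⟩ : ∃ (u : n → K) (v : m → K),
        Fintype.card n ≤ l + (P₁ + vecMulVec u v * P₃).rank ∧
        (P₂ + vecMulVec u v * P₄).rank ≤ l + r := by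
      rcases hlr.lt_or_eq with hlt | heq
      · obtain ⟨u, v, h₁, h₂⟩ := exists_vecMulVec_rank_succ_le_and_rank_le hP
        exact ⟨u, v, by omega, by omega⟩
      · obtain ⟨u, v, h₁, h₂⟩ := exists_vecMulVec_rank_succ_le_and_rank_lt hP (by omega)
        exact ⟨u, v, by omega, by omega⟩
    obtain ⟨X, hX, hX₁, hX₂⟩ := ih (isUnit_fromBlocks_add_mul hP (vecMulVec u v)) hl' hlr'
    have hrank : (vecMulVec u v + X).rank ≤ 1 + l :=
      (rank_matrix_add_le _ _).trans (add_le_add (rank_vecMulVec_le u v) hX)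
    refine ⟨vecMulVec u v + X, by omega, ?_, ?_⟩ <;> rwa [Matrix.add_mul, ← add_assoc]

end RowOperation

section Factorization

variable {K m n : Type*} [Fintype m] [Fintype n] [DecidableEq m] [DecidableEq n]

/-- The block matrix `[[P₄, P₃], [P₂, P₁]]` is a product of a unit lower, an upper and a unit lower
block triangular matrix, the lower factors having lower-left blocks `L` and `R`. This is
decomposition (3) of the paper with the upper factor left existential. -/
def HasLULFactorization [Ring K] (P₄ : Matrix m m K) (P₃ : Matrix m n K) (P₂ : Matrix n m K)
    (P₁ : Matrix n n K) (L R : Matrix n m K) : Prop :=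
  ∃ (C₄ : Matrix m m K) (C₃ : Matrix m n K) (C₁ : Matrix n n K),
    fromBlocks P₄ P₃ P₂ P₁ =
      fromBlocks 1 0 L 1 * fromBlocks C₄ C₃ 0 C₁ * fromBlocks 1 0 R 1

theorem fromBlocks_eq_lul_iff [Ring K] {P₄ C₄ : Matrix m m K} {P₃ C₃ : Matrix m n K}
    {P₂ L R : Matrix n m K} {P₁ C₁ : Matrix n n K} :
    fromBlocks P₄ P₃ P₂ P₁ =
        fromBlocks 1 0 L 1 * fromBlocks C₄ C₃ 0 C₁ * fromBlocks 1 0 R 1 ↔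
      P₄ - P₃ * R = C₄ ∧ P₃ = C₃ ∧ P₂ = L * P₄ + (P₁ - L * P₃) * R ∧ P₁ - L * P₃ = C₁ := by
  simp only [fromBlocks_multiply, fromBlocks_inj, Matrix.one_mul, Matrix.mul_one, Matrix.zero_mul,
    Matrix.mul_zero, add_zero, zero_add]
  constructor
  · rintro ⟨rfl, rfl, rfl, rfl⟩
    refine ⟨add_sub_cancel_right _ _, rfl, ?_, add_sub_cancel_left _ _⟩
    rw [add_sub_cancel_left, Matrix.mul_add, Matrix.add_mul, Matrix.mul_assoc, add_assoc]
  · rintro ⟨rfl, rfl, hP₂, rfl⟩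
    refine ⟨(sub_add_cancel _ _).symm, rfl, hP₂.trans ?_, (add_sub_cancel _ _).symm⟩
    rw [add_sub_cancel, Matrix.mul_sub, Matrix.sub_mul, Matrix.mul_assoc]
    abel

theorem hasLULFactorization_iff [Ring K] {P₄ : Matrix m m K} {P₃ : Matrix m n K}
    {P₂ : Matrix n m K} {P₁ : Matrix n n K} {L R : Matrix n m K} :
    HasLULFactorization P₄ P₃ P₂ P₁ L R ↔ P₂ = L * P₄ + (P₁ - L * P₃) * R :=
  ⟨fun ⟨_, _, _, h⟩ ↦ (fromBlocks_eq_lul_iff.mp h).2.2.1,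
    fun h ↦ ⟨_, _, _, fromBlocks_eq_lul_iff.mpr ⟨rfl, rfl, h, rfl⟩⟩⟩

theorem HasLULFactorization.isUnit_sub_mul [CommRing K] {P₄ : Matrix m m K} {P₃ : Matrix m n K}
    {P₂ : Matrix n m K} {P₁ : Matrix n n K} {L R : Matrix n m K}
    (h : HasLULFactorization P₄ P₃ P₂ P₁ L R) (hP : IsUnit (fromBlocks P₄ P₃ P₂ P₁)) :
    IsUnit (P₄ - P₃ * R) ∧ IsUnit (P₁ - L * P₃) := by
  obtain ⟨C₄, C₃, C₁, hLUL⟩ := h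
  obtain ⟨rfl, rfl, -, rfl⟩ := fromBlocks_eq_lul_iff.mp hLUL
  have hlower (X : Matrix n m K) : IsUnit (fromBlocks 1 0 X 1 : Matrix (m ⊕ n) (m ⊕ n) K) :=
    isUnit_fromBlocks_zero₁₂.mpr ⟨isUnit_one, isUnit_one⟩
  rwa [hLUL, (hlower R).mul_right_iff, (hlower L).mul_left_iff, isUnit_fromBlocks_zero₂₁] at hP

variable [Field K] {P₄ : Matrix m m K} {P₃ : Matrix m n K} {P₂ : Matrix n m K} {P₁ : Matrix n n K}
  {L R : Matrix n m K}

namespace HasLULFactorization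

theorem card_le_rank_left_add_rank (h : HasLULFactorization P₄ P₃ P₂ P₁ L R)
    (hP : IsUnit (fromBlocks P₄ P₃ P₂ P₁)) : Fintype.card n ≤ L.rank + P₁.rank := by
  have hC₁ := (h.isUnit_sub_mul hP).2
  rw [sub_eq_add_neg, ← Matrix.mul_neg] at hC₁
  have hcard := card_le_rank_add_rank_of_isUnit_add hC₁
  have hmul := rank_mul_le_left L (-P₃)
  omega

theorem card_le_rank_right_add_rank (h : HasLULFactorization P₄ P₃ P₂ P₁ L R)
    (hP : IsUnit (fromBlocks P₄ P₃ P₂ P₁)) : Fintype.card m ≤ R.rank + P₄.rank := by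
  have hC₄ := (h.isUnit_sub_mul hP).1
  rw [sub_eq_add_neg, ← Matrix.neg_mul] at hC₄
  have hcard := card_le_rank_add_rank_of_isUnit_add hC₄
  have hmul := rank_mul_le_right (-P₃) R
  omega

theorem rank_le_rank_add_rank (h : HasLULFactorization P₄ P₃ P₂ P₁ L R) :
    P₂.rank ≤ L.rank + R.rank := by
  rw [hasLULFactorization_iff.mp h]
  exact (rank_matrix_add_le _ _).trans
    (add_le_add (rank_mul_le_left _ _) (rank_mul_le_right _ _))

end HasLULFactorization

theorem exists_hasLULFactorization_rank_le {l r : ℕ}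
    (hP : IsUnit (fromBlocks P₄ P₃ P₂ P₁)) (hl : Fintype.card n ≤ l + P₁.rank)
    (hr : Fintype.card m ≤ r + P₄.rank) (hlr : P₂.rank ≤ l + r) :
    ∃ L R : Matrix n m K, HasLULFactorization P₄ P₃ P₂ P₁ L R ∧ L.rank ≤ l ∧ R.rank ≤ r := by
  obtain ⟨X, hX, hC₁, hR⟩ := exists_rank_le_and_isUnit_add_mul_and_rank_add_mul_le hP hl hr hlr
  refine ⟨-X, (P₁ + X * P₃)⁻¹ * (P₂ + X * P₄), hasLULFactorization_iff.mpr ?_, ?_,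
    (rank_mul_le_right _ _).trans hR⟩
  · rw [Matrix.neg_mul, Matrix.neg_mul, sub_neg_eq_add,
      mul_nonsing_inv_cancel_left _ _ ((isUnit_iff_isUnit_det _).mp hC₁)]
    abel
  · simpa using (rank_mul_le_right (-1 : Matrix n n K) X).trans hX

theorem stmt_2_general (P₄ : Matrix m m K) (P₃ : Matrix m n K) (P₂ : Matrix n m K)
    (P₁ : Matrix n n K) (hP : IsUnit (fromBlocks P₄ P₃ P₂ P₁)) (l r : ℕ)
    (hl : Fintype.card n ≤ l + P₁.rank) (hr : Fintype.card m ≤ r + P₄.rank)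
    (hrl : r + l = max P₂.rank (Fintype.card n + Fintype.card m - P₁.rank - P₄.rank)) :
    ∃ L R : Matrix n m K, HasLULFactorization P₄ P₃ P₂ P₁ L R ∧ L.rank = l ∧ R.rank = r := by
  obtain ⟨L, R, h, hL, hR⟩ := exists_hasLULFactorization_rank_le hP hl hr (by omega)
  have hL' := h.card_le_rank_left_add_rank hP
  have hR' := h.card_le_rank_right_add_rank hP
  have hLR := h.rank_le_rank_add_rank
  exact ⟨L, R, h, by omega, by omega⟩

end Factorization

/-- Theorem 3 (flexibility): if `l + r₁ ≥ n`, `r + r₄ ≥ m` and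
`r + l = max (r₂, n + m - r₁ - r₄)`, then `P` admits a decomposition (3)
with `rank L = l` and `rank R = r`. -/
theorem stmt_2 {K : Type*} [Field K] {m n : ℕ}
    (P₄ : Matrix (Fin m) (Fin m) K) (P₃ : Matrix (Fin m) (Fin n) K)
    (P₂ : Matrix (Fin n) (Fin m) K) (P₁ : Matrix (Fin n) (Fin n) K)
    (hP : IsUnit (Matrix.fromBlocks P₄ P₃ P₂ P₁))
    (l r : ℕ) (hl : l + P₁.rank ≥ n) (hr : r + P₄.rank ≥ m)
    (hrl : r + l = max P₂.rank (n + m - P₁.rank - P₄.rank)) :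
    ∃ (L R : Matrix (Fin n) (Fin m) K) (C₄ : Matrix (Fin m) (Fin m) K)
      (C₃ : Matrix (Fin m) (Fin n) K) (C₁ : Matrix (Fin n) (Fin n) K),
      Matrix.fromBlocks P₄ P₃ P₂ P₁ =
        Matrix.fromBlocks 1 0 L 1 * Matrix.fromBlocks C₄ C₃ 0 C₁ *
          Matrix.fromBlocks 1 0 R 1 ∧
      L.rank = l ∧ R.rank = r := by
  obtain ⟨L, R, ⟨C₄, C₃, C₁, hLUL⟩, hL, hR⟩ :=
    stmt_2_general P₄ P₃ P₂ P₁ hP l r (by simpa using hl) (by simpa using hr) (by simpa using hrl)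
  exact ⟨L, R, C₄, C₃, C₁, hLUL, hL, hR⟩
end
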